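/- Estimates for the limit minimum values: for every α>0, β>0, L>0 and M ∈ ℝ it holds that (1/2)(9α²βM²/2)^{1/3}·L − 2·6^{2/3}·α ≤ μ(α,β,L,M) ≤ μ*(α,β,L,M) ≤ (1/2)(9α²βM²/2)^{1/3}·L + 3α/2. -/

import Mathlib

/-!
On an interval of length `ℓ` a constant has squared `L²` distance at least `M²ℓ³/12` from `M x`, so
a jump and an interval of constancy together cost at least `α + βM²ℓ³/12 = α φ(Kℓ/α)`, where
`φ t = 1 + 4t³/27` and `K³ = 9α²βM²/16`. The graph of `φ` touches the diagonal from above at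
`t = 3/2`, so this cost is at least `K ℓ`. A step function has one interval of constancy more than
it has jumps, and summing over these intervals gives `K L - α ≤ μ`.

Conversely, the canonical staircase with `k` cells of length `ℓ = L/k`, centred at its jumps, costs
exactly `k α φ(Kℓ/α)` when `M ≠ 0`. Choosing `k = ⌊2KL/(3α)⌋ + 1` puts `Kℓ/α` just below `3/2`, and
rounding `k` up loses at most one jump, so `μ* ≤ K L + α`.
-/

open MeasureTheory Filter Set

namespace PeronaMalik

/-- `a_{δ,*} = δ⌊a/δ⌋`, the lower `δ`-approximation of `a`. -/
noncomputable def lowGrid (δ a : ℝ) : ℝ := δ * (⌊a / δ⌋ : ℤ)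

/-- `b_δ^* = δ⌈b/δ⌉`, the upper `δ`-approximation of `b`. -/
noncomputable def highGrid (δ b : ℝ) : ℝ := δ * (⌈b / δ⌉ : ℤ)

/-- `u` is piecewise constant at scale `δ`: constant on every interval `[zδ, (z+1)δ)`. -/
def IsPC (δ : ℝ) (u : ℝ → ℝ) : Prop :=
  ∀ z : ℤ, ∀ x ∈ Set.Ico ((z : ℝ) * δ) (((z : ℝ) + 1) * δ), u x = u ((z : ℝ) * δ)

/-- Discrete derivative `D^δ u (x) = (u(x+δ) - u(x))/δ`. -/
noncomputable def Dd (δ : ℝ) (u : ℝ → ℝ) (x : ℝ) : ℝ := (u (x + δ) - u x) / δ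

/-- The discrete Perona–Malik functional with fidelity term on `(a,b)`. -/
noncomputable def DPMF (n : ℕ) (β : ℝ) (f : ℝ → ℝ) (a b : ℝ) (u : ℝ → ℝ) : ℝ :=
  (∫ x in lowGrid (1 / (n : ℝ)) a..(highGrid (1 / (n : ℝ)) b - 1 / (n : ℝ)),
      Real.log (1 + (Dd (1 / (n : ℝ)) u x) ^ 2)) +
    β * ∫ x in a..b, (u x - f x) ^ 2

/-- `u` is a minimizer of `DPMF n β f (0,1)` over `PC_{1/n}(0,1)`. -/
def IsMinimizer (n : ℕ) (β : ℝ) (f : ℝ → ℝ) (u : ℝ → ℝ) : Prop :=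
  IsPC (1 / (n : ℝ)) u ∧
    ∀ v : ℝ → ℝ, IsPC (1 / (n : ℝ)) v → DPMF n β f 0 1 u ≤ DPMF n β f 0 1 v

/-- `m(n,β,f)`, the minimum value of the discrete Perona–Malik functional. -/
noncomputable def mval (n : ℕ) (β : ℝ) (f : ℝ → ℝ) : ℝ :=
  sInf ((fun u => DPMF n β f 0 1 u) '' {u | IsPC (1 / (n : ℝ)) u})

/-- `ω(n) = (log n / n)^{1/3}`. -/
noncomputable def omg (n : ℕ) : ℝ := (Real.log n / n) ^ ((1 : ℝ) / 3)

/-- `δ(n) = 1/(n ω(n))`. -/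
noncomputable def dlt (n : ℕ) : ℝ := 1 / ((n : ℝ) * omg n)

/-- The rescaled discrete Perona–Malik functional. -/
noncomputable def RDPM (n : ℕ) (a b : ℝ) (u : ℝ → ℝ) : ℝ :=
  (1 / omg n ^ 2) *
    ∫ x in lowGrid (dlt n) a..(highGrid (dlt n) b - dlt n),
      Real.log (1 + (Dd (dlt n) u x) ^ 2)

/-- The rescaled discrete Perona–Malik functional with fidelity term. -/
noncomputable def RDPMF (n : ℕ) (β : ℝ) (f : ℝ → ℝ) (a b : ℝ) (u : ℝ → ℝ) : ℝ :=
  RDPM n a b u + β * ∫ x in Set.Ioo a b, (u x - f x) ^ 2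

/-- `u` is a step function with finitely many jumps on `(a,b)`. -/
def IsStep (a b : ℝ) (u : ℝ → ℝ) : Prop :=
  ∃ (s : Finset ℝ) (c : ℝ) (J : ℝ → ℝ),
    (∀ p ∈ s, p ∈ Set.Ioo a b ∧ J p ≠ 0) ∧
    ∀ x ∈ Set.Ioo a b, u x = c + ∑ p ∈ s, (if p ≤ x then J p else 0)

/-- The set of jump (discontinuity) points of `u` inside `(a,b)`. -/
def jumpSet (a b : ℝ) (u : ℝ → ℝ) : Set ℝ :=
  {x ∈ Set.Ioo a b | ¬ ContinuousAt u x}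

/-- The limit functional `JF(α,β,f,(a,b),u) = α·#jumps + β∫(u-f)²`. -/
noncomputable def JF (α β : ℝ) (f : ℝ → ℝ) (a b : ℝ) (u : ℝ → ℝ) : ℝ :=
  α * ((jumpSet a b u).ncard : ℝ) + β * ∫ x in Set.Ioo a b, (u x - f x) ^ 2

/-- Strict convergence in `BV((a,b))`: `L¹` convergence plus convergence of
total variations. -/
def StrictBV (useq : ℕ → ℝ → ℝ) (u : ℝ → ℝ) (a b : ℝ) : Prop :=
  Tendsto (fun k => ∫ x in Set.Ioo a b, |useq k x - u x|) atTop (nhds 0) ∧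
  Tendsto (fun k => eVariationOn (useq k) (Set.Ioo a b)) atTop
    (nhds (eVariationOn u (Set.Ioo a b)))

/-- Locally strict convergence in `BV_loc(ℝ)`: strict convergence on every bounded
interval whose endpoints are not jump points of the limit. -/
def LocStrictBV (useq : ℕ → ℝ → ℝ) (u : ℝ → ℝ) : Prop :=
  ∀ a b : ℝ, a < b → ContinuousAt u a → ContinuousAt u b → StrictBV useq u a b

/-- `S(x) = 2⌊(x+1)/2⌋`. -/
noncomputable def stairS (x : ℝ) : ℝ := 2 * (⌊(x + 1) / 2⌋ : ℤ)

/-- The canonical `(H,V)`-staircase `S_{H,V}(x) = V·S(x/H)`. -/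
noncomputable def canStair (H V : ℝ) (x : ℝ) : ℝ := V * stairS (x / H)

/-- Oblique translations of the canonical `(H,V)`-staircase. -/
def Obl (H V : ℝ) (v : ℝ → ℝ) : Prop :=
  ∃ τ ∈ Set.Icc (-1 : ℝ) 1, ∀ x, v x = canStair H V (x - H * τ) + V * τ

/-- Graph translations of horizontal type of the canonical `(H,V)`-staircase. -/
def Orz (H V : ℝ) (v : ℝ → ℝ) : Prop :=
  ∃ τ ∈ Set.Icc (-1 : ℝ) 1, ∀ x, v x = canStair H V (x - H * τ)

/-- `μ_n(β,L,M)`: minimum of the rescaled functional with affine forcing term. -/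
noncomputable def muDisc (n : ℕ) (β L M : ℝ) : ℝ :=
  sInf ((fun u => RDPMF n β (fun x => M * x) 0 L u) '' {u | IsPC (dlt n) u})

/-- `μ*_n(β,L,M)`: same as `μ_n` but with boundary conditions `u(0)=0`, `u(L^*)=ML`. -/
noncomputable def muDiscStar (n : ℕ) (β L M : ℝ) : ℝ :=
  sInf ((fun u => RDPMF n β (fun x => M * x) 0 L u) ''
    {u | IsPC (dlt n) u ∧ u 0 = 0 ∧ u (highGrid (dlt n) L - dlt n) = M * L})

/-- `μ(α,β,L,M)`: minimum of the limit functional with affine forcing term. -/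
noncomputable def muLim (α β L M : ℝ) : ℝ :=
  sInf ((fun u => JF α β (fun x => M * x) 0 L u) '' {u | IsStep 0 L u})

/-- `μ*(α,β,L,M)`: same as `μ` but with boundary values `u(0⁺)=0`, `u(L⁻)=ML`. -/
noncomputable def muLimStar (α β L M : ℝ) : ℝ :=
  sInf ((fun u => JF α β (fun x => M * x) 0 L u) ''
    {u | IsStep 0 L u ∧ Tendsto u (nhdsWithin 0 (Set.Ioi 0)) (nhds 0) ∧
         Tendsto u (nhdsWithin L (Set.Iio L)) (nhds (M * L))})

/-- `u` and `v` have the same boundary values `u(a⁺)=v(a⁺)`, `u(b⁻)=v(b⁻)`. -/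
def SameBdry (a b : ℝ) (u v : ℝ → ℝ) : Prop :=
  (∀ c : ℝ, Tendsto v (nhdsWithin a (Set.Ioi a)) (nhds c) →
     Tendsto u (nhdsWithin a (Set.Ioi a)) (nhds c)) ∧
  (∀ c : ℝ, Tendsto v (nhdsWithin b (Set.Iio b)) (nhds c) →
     Tendsto u (nhdsWithin b (Set.Iio b)) (nhds c))

/-- `v` is a local minimizer for `JF(α,β,f,(a,b),·)` among step functions with the
same boundary values. -/
def IsLocalMinJF (α β : ℝ) (f : ℝ → ℝ) (a b : ℝ) (v : ℝ → ℝ) : Prop :=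
  IsStep a b v ∧
  ∀ u : ℝ → ℝ, IsStep a b u → SameBdry a b u v → JF α β f a b v ≤ JF α β f a b u

/-- `v` is an entire local minimizer for `JF(α,β,f,·,·)`. -/
def IsEntireLocalMinJF (α β : ℝ) (f : ℝ → ℝ) (v : ℝ → ℝ) : Prop :=
  ∀ a b : ℝ, a < b → IsLocalMinJF α β f a b v

/-- `v` is a local minimizer for `RDPMF_n(β,f,(a,b),·)` among piecewise constant
functions with the same boundary values. -/
def IsLocalMinRDPMF (n : ℕ) (β : ℝ) (f : ℝ → ℝ) (a b : ℝ) (v : ℝ → ℝ) : Prop :=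
  IsPC (dlt n) v ∧
  ∀ u : ℝ → ℝ, IsPC (dlt n) u →
    u (lowGrid (dlt n) a) = v (lowGrid (dlt n) a) →
    u (highGrid (dlt n) b - dlt n) = v (highGrid (dlt n) b - dlt n) →
    RDPMF n β f a b v ≤ RDPMF n β f a b u

/-! ### Step functions -/

section StepFn

variable {s : Finset ℝ} {a b c p x : ℝ} {f J u : ℝ → ℝ}

/-- The right-continuous step function with leftmost value `c` and a jump of height `J p` at each
`p ∈ s`; the heights may vanish, unlike those in `IsStep`. -/
noncomputable def stepFn (s : Finset ℝ) (c : ℝ) (J : ℝ → ℝ) (x : ℝ) : ℝ :=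
  c + ∑ p ∈ s, if p ≤ x then J p else 0

lemma stepFn_insert (hp : p ∉ s) :
    stepFn (insert p s) c J x = stepFn s c J x + if p ≤ x then J p else 0 := by
  rw [stepFn, stepFn, Finset.sum_insert hp]
  ring

lemma stepFn_insert_of_lt (hp : p ∉ s) (hx : x < p) :
    stepFn (insert p s) c J x = stepFn s c J x := by
  rw [stepFn_insert hp, if_neg hx.not_ge, add_zero]

lemma stepFn_of_forall_le (hx : ∀ p ∈ s, p ≤ x) : stepFn s c J x = c + ∑ p ∈ s, J p := by
  rw [stepFn, Finset.sum_congr rfl fun p hp => if_pos (hx p hp)]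

lemma continuousAt_ite_le {v : ℝ} (hpx : p ≠ x) :
    ContinuousAt (fun y => if p ≤ y then v else 0) x := by
  rcases hpx.lt_or_gt with h | h
  · refine continuousAt_const.congr (f := fun _ => v) ?_
    filter_upwards [lt_mem_nhds h] with y hy using (if_pos hy.le).symm
  · refine continuousAt_const.congr (f := fun _ => 0) ?_
    filter_upwards [gt_mem_nhds h] with y hy using (if_neg hy.not_ge).symm

lemma continuousAt_stepFn (hx : x ∉ s) : ContinuousAt (stepFn s c J) x :=
  continuousAt_const.add <| tendsto_finsetSum _ fun _ hp =>
    continuousAt_ite_le (ne_of_mem_of_not_mem hp hx)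

lemma not_continuousAt_stepFn (hp : p ∈ s) (hJ : J p ≠ 0) :
    ¬ ContinuousAt (stepFn s c J) p := by
  have hps : p ∉ s.erase p := Finset.notMem_erase p s
  rw [← Finset.insert_erase hp]
  intro hcont
  have left_limit : Tendsto (stepFn (insert p (s.erase p)) c J) (nhdsWithin p (Iio p))
      (nhds (stepFn (s.erase p) c J p)) :=
    (continuousAt_stepFn hps).continuousWithinAt.tendsto.congr' <| by
      filter_upwards [self_mem_nhdsWithin] with x hx using (stepFn_insert_of_lt hps hx).symm
  have heq := tendsto_nhds_unique hcont.continuousWithinAt.tendsto left_limit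
  rw [stepFn_insert hps, if_pos le_rfl] at heq
  exact hJ (by linarith)

lemma isStep_of_eqOn_stepFn (hs : ↑s ⊆ Ioo a b) (hu : EqOn u (stepFn s c J) (Ioo a b)) :
    IsStep a b u := by
  refine ⟨s.filter (J · ≠ 0), c, J, fun p hp => ?_, fun x hx => ?_⟩
  · rw [Finset.mem_filter] at hp
    exact ⟨hs hp.1, hp.2⟩
  · rw [hu hx, stepFn, Finset.sum_filter_of_ne]
    intro p _ hne hJ
    simp only [hJ, ite_self, ne_eq, not_true_eq_false] at hne

lemma isStep_const (a b c : ℝ) : IsStep a b fun _ => c :=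
  isStep_of_eqOn_stepFn (s := ∅) (c := c) (J := 0) (by simp) fun x _ => by simp [stepFn]

lemma continuousAt_iff_of_eqOn_stepFn (hu : EqOn u (stepFn s c J) (Ioo a b)) (hx : x ∈ Ioo a b) :
    ContinuousAt u x ↔ ContinuousAt (stepFn s c J) x :=
  continuousAt_congr (hu.eventuallyEq_of_mem (isOpen_Ioo.mem_nhds hx))

lemma jumpSet_subset (hu : EqOn u (stepFn s c J) (Ioo a b)) : jumpSet a b u ⊆ s := by
  rintro x ⟨hx, hjump⟩
  by_contra hxs
  exact hjump ((continuousAt_iff_of_eqOn_stepFn hu hx).2 (continuousAt_stepFn hxs))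

lemma jumpSet_eq (hu : EqOn u (stepFn s c J) (Ioo a b)) (hs : ↑s ⊆ Ioo a b)
    (hJ : ∀ p ∈ s, J p ≠ 0) : jumpSet a b u = s :=
  (jumpSet_subset hu).antisymm fun p hp => ⟨hs hp, fun hcont =>
    not_continuousAt_stepFn hp (hJ p hp) ((continuousAt_iff_of_eqOn_stepFn hu (hs hp)).1 hcont)⟩

lemma memLp_stepFn (s : Finset ℝ) (c : ℝ) (J : ℝ → ℝ) (q : ENNReal) (μ : Measure ℝ)
    [IsFiniteMeasure μ] : MemLp (stepFn s c J) q μ := by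
  refine (memLp_const c).add <| memLp_finsetSum s fun p _ => ?_
  have hite : (fun x => if p ≤ x then J p else 0) = (Ici p).indicator fun _ => J p := by
    ext x
    simp only [indicator_apply, mem_Ici]
  rw [hite]
  exact (memLp_const (J p)).indicator measurableSet_Ici

lemma intervalIntegrable_stepFn_sub_sq (hf : MemLp f 2 (volume.restrict (Ioc a b)))
    (hab : a ≤ b) (s : Finset ℝ) (c : ℝ) (J : ℝ → ℝ) :
    IntervalIntegrable (fun x => (stepFn s c J x - f x) ^ 2) volume a b := by
  rw [intervalIntegrable_iff_integrableOn_Ioc_of_le hab]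
  exact ((memLp_stepFn s c J 2 _).sub hf).integrable_sq

lemma integral_stepFn_insert_sub_sq (hf : MemLp f 2 (volume.restrict (Ioc a b)))
    (hp : p ∈ Ioo a b) (hlt : ∀ q ∈ s, q < p) :
    ∫ x in a..b, (stepFn (insert p s) c J x - f x) ^ 2
      = (∫ x in a..p, (stepFn s c J x - f x) ^ 2)
        + ∫ x in p..b, (c + ∑ q ∈ insert p s, J q - f x) ^ 2 := by
  have hps : p ∉ s := fun hmem => (hlt p hmem).false
  rw [← intervalIntegral.integral_add_adjacent_intervals
    (intervalIntegrable_stepFn_sub_sq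
      (hf.mono_measure (Measure.restrict_mono_set _ (Ioc_subset_Ioc_right hp.2.le))) hp.1.le _ _ _)
    (intervalIntegrable_stepFn_sub_sq
      (hf.mono_measure (Measure.restrict_mono_set _ (Ioc_subset_Ioc_left hp.1.le))) hp.2.le _ _ _)]
  congr 1
  · refine intervalIntegral.integral_congr_uIoo fun x hx => ?_
    rw [uIoo_of_le hp.1.le] at hx
    simp only [stepFn_insert_of_lt hps hx.2]
  · refine intervalIntegral.integral_congr_uIoo fun x hx => ?_
    rw [uIoo_of_le hp.2.le] at hx
    have hle : ∀ q ∈ insert p s, q ≤ x :=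
      (Finset.forall_mem_insert _ _ _).2 ⟨hx.1.le, fun q hq => ((hlt q hq).trans hx.1).le⟩
    simp only [stepFn_of_forall_le hle]

end StepFn

/-! ### Lower bound -/

section LowerBound

variable {α β K a b : ℝ} {f u : ℝ → ℝ}

lemma JF_eq_intervalIntegral (α β : ℝ) (f : ℝ → ℝ) (u : ℝ → ℝ) (hab : a ≤ b) :
    JF α β f a b u = α * (jumpSet a b u).ncard + β * ∫ x in a..b, (u x - f x) ^ 2 := by
  rw [JF, intervalIntegral.integral_of_le hab, integral_Ioc_eq_integral_Ioo]

lemma JF_nonneg (hα : 0 ≤ α) (hβ : 0 ≤ β) (f : ℝ → ℝ) (a b : ℝ) (u : ℝ → ℝ) :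
    0 ≤ JF α β f a b u :=
  add_nonneg (by positivity) (mul_nonneg hβ (integral_nonneg fun _ => sq_nonneg _))

/-- The extra `α` pays for one fictitious jump: there is one more interval of constancy than there
are jumps. -/
lemma mul_sub_le_stepFn_cost (hf : MemLp f 2 (volume.restrict (Ioc a b))) (hab : a ≤ b)
    (hK : ∀ C t₁ t₂, a ≤ t₁ → t₁ ≤ t₂ → t₂ ≤ b →
      K * (t₂ - t₁) ≤ α + β * ∫ x in t₁..t₂, (C - f x) ^ 2)
    {s : Finset ℝ} (hs : ↑s ⊆ Ioo a b) (c : ℝ) (J : ℝ → ℝ) :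
    K * (b - a) ≤ α * s.card + β * (∫ x in a..b, (stepFn s c J x - f x) ^ 2) + α := by
  induction s using Finset.induction_on_max generalizing b with
  | empty =>
    simpa [stepFn, add_comm] using hK c a b le_rfl hab le_rfl
  | insert p s hlt ih =>
    obtain ⟨hap, hpb⟩ : p ∈ Ioo a b := hs (Finset.mem_insert_self p s)
    have hps : p ∉ s := fun hp => (hlt p hp).false
    have hf_left := hf.mono_measure (Measure.restrict_mono_set _ (Ioc_subset_Ioc_right hpb.le))
    have cost_left := ih hf_left hap.le (fun C t₁ t₂ h₁ h₂ h₃ => hK C t₁ t₂ h₁ h₂ (h₃.trans hpb.le))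
      fun q hq => ⟨(hs (Finset.mem_insert_of_mem hq)).1, hlt q hq⟩
    have cost_right := hK (c + ∑ q ∈ insert p s, J q) p b hap.le hpb.le le_rfl
    rw [integral_stepFn_insert_sub_sq hf ⟨hap, hpb⟩ hlt, Finset.card_insert_of_notMem hps]
    push_cast
    linarith

lemma mul_sub_le_JF_add (hf : MemLp f 2 (volume.restrict (Ioc a b))) (hab : a ≤ b)
    (hK : ∀ C t₁ t₂, a ≤ t₁ → t₁ ≤ t₂ → t₂ ≤ b →
      K * (t₂ - t₁) ≤ α + β * ∫ x in t₁..t₂, (C - f x) ^ 2)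
    (hu : IsStep a b u) : K * (b - a) ≤ JF α β f a b u + α := by
  obtain ⟨s, c, J, hs, hu⟩ := hu
  have hu' : EqOn u (stepFn s c J) (Ioo a b) := hu
  have hs' : ↑s ⊆ Ioo a b := fun p hp => (hs p hp).1
  have cost_eq : JF α β f a b u
      = α * s.card + β * ∫ x in a..b, (stepFn s c J x - f x) ^ 2 := by
    rw [JF_eq_intervalIntegral α β f u hab, jumpSet_eq hu' hs' fun p hp => (hs p hp).2,
      ncard_coe_finset]
    congr 2
    refine intervalIntegral.integral_congr_uIoo fun x hx => ?_
    rw [uIoo_of_le hab] at hx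
    simp only [hu' hx]
  rw [cost_eq]
  exact mul_sub_le_stepFn_cost hf hab hK hs' c J

/-- Equality holds when `C` is the mean `M (a + b) / 2`. -/
lemma le_integral_const_sub_mul_sq (C M : ℝ) (hab : a ≤ b) :
    M ^ 2 * (b - a) ^ 3 / 12 ≤ ∫ x in a..b, (C - M * x) ^ 2 := by
  have hderiv : ∀ x ∈ uIcc a b, HasDerivAt
      (fun x => C ^ 2 * x - C * M * x ^ 2 + M ^ 2 / 3 * x ^ 3) ((C - M * x) ^ 2) x := by
    intro x _
    refine ((((hasDerivAt_id x).const_mul (C ^ 2)).sub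
      ((hasDerivAt_pow 2 x).const_mul (C * M))).add
      ((hasDerivAt_pow 3 x).const_mul (M ^ 2 / 3))).congr_deriv ?_
    norm_num
    ring
  rw [intervalIntegral.integral_eq_sub_of_hasDerivAt hderiv
    (Continuous.intervalIntegrable (by fun_prop) a b)]
  nlinarith [mul_nonneg (sub_nonneg.2 hab) (sq_nonneg (C - M * (a + b) / 2))]

end LowerBound

/-! ### The canonical staircase -/

section CanStair

variable {H : ℝ}

lemma canStair_add_mul (hH : H ≠ 0) (V x : ℝ) (z : ℤ) :
    canStair H V (x + z * (2 * H)) = canStair H V x + z * (2 * V) := by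
  have hfloor : ((x + z * (2 * H)) / H + 1) / 2 = (x / H + 1) / 2 + z := by
    field_simp
    ring
  rw [canStair, canStair, stairS, stairS, hfloor, Int.floor_add_intCast]
  push_cast
  ring

lemma canStair_eq_zero (hH : 0 < H) (V : ℝ) {x : ℝ} (hx : x ∈ Ico (-H) H) :
    canStair H V x = 0 := by
  have hfloor : ⌊(x / H + 1) / 2⌋ = 0 := by
    have h₁ : -1 ≤ x / H := by rw [le_div_iff₀ hH]; linarith [hx.1]
    have h₂ : x / H < 1 := by rw [div_lt_iff₀ hH]; linarith [hx.2]
    rw [Int.floor_eq_zero_iff]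
    constructor <;> linarith
  rw [canStair, stairS, hfloor]
  simp

lemma tendsto_canStair (hH : 0 < H) (V : ℝ) (z : ℤ) :
    Tendsto (canStair H V) (nhds (z * (2 * H))) (nhds (z * (2 * V))) := by
  refine tendsto_const_nhds.congr' ?_
  have hnhds : Ioo (z * (2 * H) - H) (z * (2 * H) + H) ∈ nhds (z * (2 * H)) :=
    Ioo_mem_nhds (by linarith) (by linarith)
  filter_upwards [hnhds] with x hx
  have hmem : x - z * (2 * H) ∈ Ico (-H) H := ⟨by linarith [hx.1], by linarith [hx.2]⟩
  have hcell := canStair_add_mul hH.ne' V (x - z * (2 * H)) z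
  rwa [sub_add_cancel, canStair_eq_zero hH V hmem, zero_add, eq_comm] at hcell

/-- The first `k` positive jump points `H, 3H, …, (2k - 1)H` of `canStair H V`. -/
noncomputable def oddMultiples (H : ℝ) (k : ℕ) : Finset ℝ :=
  (Finset.range k).image fun j : ℕ => (2 * j + 1) * H

lemma oddMultiples_subset_Ioo (hH : 0 < H) (k : ℕ) :
    ↑(oddMultiples H k) ⊆ Ioo 0 (k * (2 * H)) := by
  intro p hp
  obtain ⟨j, hj, rfl⟩ := Finset.mem_image.1 (Finset.mem_coe.1 hp)
  have hjk : (j : ℝ) + 1 ≤ k := by exact_mod_cast Finset.mem_range.1 hj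
  exact ⟨by positivity, by nlinarith⟩

lemma eqOn_canStair_stepFn (hH : 0 < H) (V : ℝ) (k : ℕ) :
    EqOn (canStair H V) (stepFn (oddMultiples H k) 0 fun _ => 2 * V) (Ioo 0 (k * (2 * H))) := by
  intro x hx
  set y := (x / H + 1) / 2 with hy
  have hy_nonneg : 0 ≤ y := by have := hx.1; positivity
  have hxy : x = (2 * y - 1) * H := by rw [hy]; field_simp; ring
  have hfloor : ⌊y⌋₊ ≤ k := by
    rw [← Nat.lt_add_one_iff, Nat.floor_lt hy_nonneg]
    push_cast
    nlinarith [hx.2]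
  have hfilter : (Finset.range k).filter (fun j : ℕ => (2 * (j : ℝ) + 1) * H ≤ x)
      = Finset.range ⌊y⌋₊ := by
    ext j
    have hjump : (2 * (j : ℝ) + 1) * H ≤ x ↔ j + 1 ≤ ⌊y⌋₊ := by
      rw [hxy, mul_le_mul_iff_left₀ hH, Nat.le_floor_iff hy_nonneg]
      push_cast
      constructor <;> intro h <;> linarith
    rw [Finset.mem_filter, Finset.mem_range, Finset.mem_range, hjump]
    lia
  have hinj : InjOn (fun j : ℕ => (2 * (j : ℝ) + 1) * H) (Finset.range k) := fun i _ j _ hij => by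
    simpa [hH.ne'] using hij
  rw [stepFn, oddMultiples, Finset.sum_image hinj, ← Finset.sum_filter, hfilter,
    Finset.sum_const, Finset.card_range, nsmul_eq_mul, canStair, stairS, ← hy,
    ← natCast_floor_eq_intCast_floor hy_nonneg]
  ring

lemma isStep_canStair (hH : 0 < H) (V : ℝ) (k : ℕ) : IsStep 0 (k * (2 * H)) (canStair H V) :=
  isStep_of_eqOn_stepFn (oddMultiples_subset_Ioo hH k) (eqOn_canStair_stepFn hH V k)

lemma ncard_jumpSet_canStair_le (hH : 0 < H) (V : ℝ) (k : ℕ) :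
    (jumpSet 0 (k * (2 * H)) (canStair H V)).ncard ≤ k :=
  calc (jumpSet 0 (k * (2 * H)) (canStair H V)).ncard
      ≤ (oddMultiples H k : Set ℝ).ncard :=
        ncard_le_ncard (jumpSet_subset (eqOn_canStair_stepFn hH V k))
          (oddMultiples H k).finite_toSet
    _ = (oddMultiples H k).card := ncard_coe_finset _
    _ ≤ (Finset.range k).card := Finset.card_image_le
    _ = k := Finset.card_range k

lemma periodic_canStair_sub_sq (hH : H ≠ 0) (M : ℝ) :
    Function.Periodic (fun x => (canStair H (M * H) x - M * x) ^ 2) (2 * H) := by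
  intro x
  have hshift := canStair_add_mul hH (M * H) x 1
  rw [Int.cast_one, one_mul, one_mul] at hshift
  simp only [hshift]
  ring

lemma integral_canStair_sub_sq (hH : 0 < H) (M : ℝ) (k : ℕ) :
    ∫ x in 0..k * (2 * H), (canStair H (M * H) x - M * x) ^ 2
      = k * (M ^ 2 * (2 * H) ^ 3 / 12) := by
  have hper := periodic_canStair_sub_sq hH.ne' M
  set g := fun x => (canStair H (M * H) x - M * x) ^ 2
  have hend : -H + 2 * H = H := by ring
  have hcell : EqOn (fun x => M ^ 2 * x ^ 2) g (uIoo (-H) H) := fun x hx => by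
    rw [uIoo_of_le (by linarith)] at hx
    simp only [g, canStair_eq_zero hH (M * H) (Ioo_subset_Ico_self hx)]
    ring
  have hcell_int : IntervalIntegrable g volume (-H) (-H + 2 * H) := by
    rw [hend]
    exact (Continuous.intervalIntegrable (by fun_prop) _ _).congr_uIoo hcell
  calc ∫ x in 0..k * (2 * H), g x
      = k * ∫ x in 0..0 + 2 * H, g x := by
        simpa using hper.intervalIntegral_add_zsmul_eq k 0
          (hper.intervalIntegrable (by positivity) hcell_int)
    _ = k * ∫ x in -H..H, g x := by rw [hper.intervalIntegral_add_eq 0 (-H), hend]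
    _ = k * ∫ x in -H..H, M ^ 2 * x ^ 2 := by rw [intervalIntegral.integral_congr_uIoo hcell]
    _ = k * (M ^ 2 * (2 * H) ^ 3 / 12) := by
      rw [intervalIntegral.integral_const_mul, integral_pow]
      ring

lemma JF_canStair_le {α : ℝ} (hα : 0 ≤ α) (β M : ℝ) (hH : 0 < H) (k : ℕ) :
    JF α β (fun x => M * x) 0 (k * (2 * H)) (canStair H (M * H))
      ≤ α * k + β * (k * (M ^ 2 * (2 * H) ^ 3 / 12)) := by
  rw [JF_eq_intervalIntegral _ _ _ _ (by positivity), integral_canStair_sub_sq hH]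
  gcongr
  exact ncard_jumpSet_canStair_le hH _ k

/-- The competitor is the canonical staircase with `k` cells of length `L / k`. -/
lemma exists_isStep_JF_le {α : ℝ} (hα : 0 ≤ α) (β M : ℝ) {L : ℝ} (hL : 0 < L) {k : ℕ}
    (hk : 0 < k) :
    ∃ u, (IsStep 0 L u ∧ Tendsto u (nhdsWithin 0 (Ioi 0)) (nhds 0) ∧
        Tendsto u (nhdsWithin L (Iio L)) (nhds (M * L))) ∧
      JF α β (fun x => M * x) 0 L u ≤ α * k + β * (k * (M ^ 2 * (L / k) ^ 3 / 12)) := by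
  obtain ⟨H, hH, hkH, hcell⟩ : ∃ H, 0 < H ∧ k * (2 * H) = L ∧ 2 * H = L / k :=
    ⟨L / (2 * k), by positivity, by field_simp, by field_simp⟩
  have hzero := tendsto_canStair hH (M * H) 0
  have hend := tendsto_canStair hH (M * H) k
  have hcost := JF_canStair_le hα β M hH k
  rw [Int.cast_zero, zero_mul, zero_mul] at hzero
  rw [Int.cast_natCast, hkH, show k * (2 * (M * H)) = M * L by rw [← hkH]; ring] at hend
  rw [hkH, hcell] at hcost
  exact ⟨canStair H (M * H), ⟨hkH ▸ isStep_canStair hH (M * H) k,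
    hzero.mono_left nhdsWithin_le_nhds, hend.mono_left nhdsWithin_le_nhds⟩, hcost⟩

end CanStair

/-! ### The optimal cost per unit length -/

section Rate

/-- The difference of the two sides is `4/27 (t - 3/2)² (t + 3)`. -/
lemma le_one_add_mul_cube {t : ℝ} (ht : 0 ≤ t) : t ≤ 1 + 4 / 27 * t ^ 3 := by
  nlinarith [mul_nonneg (sq_nonneg (t - 3 / 2)) (add_nonneg ht zero_le_three)]

lemma exists_nat_mul_one_add_mul_cube_le {t : ℝ} (ht : 0 ≤ t) :
    ∃ k : ℕ, 0 < k ∧ k + k * (4 / 27 * (t / k) ^ 3) ≤ t + 1 := by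
  refine ⟨⌊2 / 3 * t⌋₊ + 1, Nat.succ_pos _, ?_⟩
  have hfloor : (⌊2 / 3 * t⌋₊ : ℝ) ≤ 2 / 3 * t := Nat.floor_le (by positivity)
  have hlt := Nat.lt_floor_add_one (2 / 3 * t)
  push_cast
  set k : ℝ := ⌊2 / 3 * t⌋₊ + 1
  have hk : 0 < k := by positivity
  have hcell : t / k ≤ 3 / 2 := by rw [div_le_iff₀ hk]; linarith
  calc k + k * (4 / 27 * (t / k) ^ 3)
      = k + 4 / 27 * t * (t / k) ^ 2 := by field_simp
    _ ≤ k + 4 / 27 * t * (3 / 2) ^ 2 := by gcongr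
    _ ≤ t + 1 := by linarith

/-- The infimum over `ℓ > 0` of `(α + βM²ℓ³/12) / ℓ`, the cost per unit length of a jump followed by
an interval of constancy of length `ℓ`. -/
noncomputable def optimalRate (α β M : ℝ) : ℝ :=
  1 / 2 * (9 * α ^ 2 * β * M ^ 2 / 2) ^ ((1 : ℝ) / 3)

variable {α β : ℝ}

lemma optimalRate_nonneg (hβ : 0 ≤ β) (α M : ℝ) : 0 ≤ optimalRate α β M := by
  unfold optimalRate
  positivity

lemma optimalRate_pow_three (hβ : 0 ≤ β) (α M : ℝ) :
    optimalRate α β M ^ 3 = 9 * α ^ 2 * β * M ^ 2 / 16 := by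
  have hbase : 0 ≤ 9 * α ^ 2 * β * M ^ 2 / 2 := by positivity
  rw [optimalRate, mul_pow, ← Real.rpow_mul_natCast hbase]
  norm_num
  ring

lemma fidelity_eq_mul_cube (hα : α ≠ 0) (hβ : 0 ≤ β) (M l : ℝ) :
    β * (M ^ 2 * l ^ 3 / 12) = α * (4 / 27 * (optimalRate α β M * l / α) ^ 3) := by
  rw [div_pow, mul_pow, optimalRate_pow_three hβ]
  field_simp
  ring

lemma optimalRate_mul_le (hα : 0 < α) (hβ : 0 ≤ β) (M : ℝ) {l : ℝ} (hl : 0 ≤ l) :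
    optimalRate α β M * l ≤ α + β * (M ^ 2 * l ^ 3 / 12) := by
  have hrate := optimalRate_nonneg hβ α M
  set t := optimalRate α β M * l / α with ht
  calc optimalRate α β M * l = α * t := by rw [ht]; field_simp
    _ ≤ α * (1 + 4 / 27 * t ^ 3) := by gcongr; exact le_one_add_mul_cube (by positivity)
    _ = α + β * (M ^ 2 * l ^ 3 / 12) := by rw [fidelity_eq_mul_cube hα.ne' hβ]; ring

lemma exists_nat_cost_le (hα : 0 < α) (hβ : 0 ≤ β) (M : ℝ) {L : ℝ} (hL : 0 ≤ L) :
    ∃ k : ℕ, 0 < k ∧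
      α * k + β * (k * (M ^ 2 * (L / k) ^ 3 / 12)) ≤ optimalRate α β M * L + α := by
  have hrate := optimalRate_nonneg hβ α M
  set t := optimalRate α β M * L / α with ht
  obtain ⟨k, hk, hcost⟩ := exists_nat_mul_one_add_mul_cube_le (t := t) (by positivity)
  refine ⟨k, hk, ?_⟩
  calc α * k + β * (k * (M ^ 2 * (L / k) ^ 3 / 12))
      = α * k + k * (β * (M ^ 2 * (L / k) ^ 3 / 12)) := by ring
    _ = α * (k + k * (4 / 27 * (t / k) ^ 3)) := by
      rw [fidelity_eq_mul_cube hα.ne' hβ, ht]; ring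
    _ ≤ α * (t + 1) := by gcongr
    _ = optimalRate α β M * L + α := by rw [ht]; field_simp

end Rate

/-! ### Bounds on the minimum values -/

section MinimumValues

variable {α β L : ℝ}

lemma memLp_two_mul_restrict_Ioc (M a b : ℝ) :
    MemLp (fun x => M * x) 2 (volume.restrict (Ioc a b)) :=
  (memLp_two_iff_integrable_sq (by fun_prop)).2 <|
    Continuous.integrableOn_Ioc (by fun_prop : Continuous fun x : ℝ => (M * x) ^ 2)

lemma optimalRate_mul_sub_le_muLim (hα : 0 < α) (hβ : 0 ≤ β) (hL : 0 ≤ L) (M : ℝ) :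
    optimalRate α β M * L - α ≤ muLim α β L M := by
  refine le_csInf (Nonempty.image _ ⟨_, isStep_const 0 L 0⟩) (forall_mem_image.2 fun u hu => ?_)
  have hcost := mul_sub_le_JF_add (memLp_two_mul_restrict_Ioc M 0 L) hL
    (fun C t₁ t₂ _ h _ => (optimalRate_mul_le hα hβ M (sub_nonneg.2 h)).trans <| by
      gcongr; exact le_integral_const_sub_mul_sq C M h) hu
  rw [sub_zero] at hcost
  linarith

lemma bddBelow_image_JF (hα : 0 ≤ α) (hβ : 0 ≤ β) (f : ℝ → ℝ) (a b : ℝ) (A : Set (ℝ → ℝ)) :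
    BddBelow ((fun u => JF α β f a b u) '' A) :=
  ⟨0, forall_mem_image.2 fun u _ => JF_nonneg hα hβ f a b u⟩

lemma muLim_le_muLimStar (hα : 0 ≤ α) (hβ : 0 ≤ β) (hL : 0 < L) (M : ℝ) :
    muLim α β L M ≤ muLimStar α β L M := by
  obtain ⟨u, hu, -⟩ := exists_isStep_JF_le hα β M hL one_pos
  exact csInf_le_csInf (bddBelow_image_JF hα hβ _ _ _ _) (Nonempty.image _ ⟨u, hu⟩)
    (image_mono fun _ hv => hv.1)

lemma muLimStar_le_optimalRate_mul_add (hα : 0 < α) (hβ : 0 ≤ β) (hL : 0 < L) (M : ℝ) :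
    muLimStar α β L M ≤ optimalRate α β M * L + α := by
  obtain ⟨k, hk, hcost⟩ := exists_nat_cost_le hα hβ M hL.le
  obtain ⟨u, hu, hJF⟩ := exists_isStep_JF_le hα.le β M hL hk
  calc muLimStar α β L M ≤ JF α β (fun x => M * x) 0 L u :=
        csInf_le (bddBelow_image_JF hα.le hβ _ _ _ _) (mem_image_of_mem _ hu)
    _ ≤ optimalRate α β M * L + α := hJF.trans hcost

end MinimumValues

/-- Estimates for the limit minimum values:
`(1/2)(9α²βM²/2)^{1/3} L − 2·6^{2/3} α ≤ μ(α,β,L,M) ≤ μ*(α,β,L,M) ≤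
(1/2)(9α²βM²/2)^{1/3} L + 3α/2`. -/
theorem mu_estimates
    (α β L M : ℝ) (hα : 0 < α) (hβ : 0 < β) (hL : 0 < L) :
    (1 / 2) * (9 * α ^ 2 * β * M ^ 2 / 2) ^ ((1 : ℝ) / 3) * L
        - 2 * (6 : ℝ) ^ ((2 : ℝ) / 3) * α ≤ muLim α β L M ∧
    muLim α β L M ≤ muLimStar α β L M ∧
    muLimStar α β L M ≤
      (1 / 2) * (9 * α ^ 2 * β * M ^ 2 / 2) ^ ((1 : ℝ) / 3) * L + 3 * α / 2 := by
  rw [← optimalRate]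
  have hlower := optimalRate_mul_sub_le_muLim hα hβ.le hL.le M
  have hupper := muLimStar_le_optimalRate_mul_add hα hβ.le hL M
  have hconst : (1 : ℝ) ≤ 6 ^ ((2 : ℝ) / 3) := Real.one_le_rpow (by norm_num) (by norm_num)
  exact ⟨by nlinarith, muLim_le_muLimStar hα.le hβ.le hL M, by linarith⟩

end PeronaMalik
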